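/- Let K be a field and let I_S ⊂ K[x_1,…,x_5] be the kernel of the K-algebra homomorphism φ with φ(x_1) = t_1^6, φ(x_2) = t_2^2, φ(x_3) = t_1^7, φ(x_4) = t_1^6t_2^4, φ(x_5) = t_1^{15} (equivalently I_S = ⟨x_1x_2^2 − x_4, x_3^3 − x_1x_5, x_1^5 − x_5^2⟩). Then the ideal of the tangent cone at the origin equals I_S* = ⟨x_5^2, x_4, x_3^3x_5, x_3^6, x_1x_5⟩. -/

import Mathlib

open MvPolynomial

/-- `f*`: the nonzero homogeneous component of `f` of smallest total degree. -/
noncomputable def lowestForm {K : Type*} [CommSemiring K] {σ : Type*}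
    (f : MvPolynomial σ K) : MvPolynomial σ K :=
  homogeneousComponent (sInf {i : ℕ | homogeneousComponent i f ≠ 0}) f

/-- `I*`: the ideal of the tangent cone at the origin, generated by the
lowest-degree forms `f*` of the nonzero elements `f ∈ I`. -/
noncomputable def tangentConeIdeal {K : Type*} [CommSemiring K] {σ : Type*}
    (I : Ideal (MvPolynomial σ K)) : Ideal (MvPolynomial σ K) :=
  Ideal.span {g | ∃ f ∈ I, f ≠ 0 ∧ g = lowestForm f}

/-!
The kernel of a monomial map `φ : x^m ↦ t^{w(m)}` is graded by the values of `w`, so each monomial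
of `f ∈ ker φ` shares its `w`-value with another monomial of `f`. A monomial of `f*` has least
degree in `f`; hence it is never the strict degree maximum of its `w`-fibre. Conversely, if `x^e`
and `x^{e'}` lie in one fibre and `x^e` has the smaller degree, then `x^e = (x^e - x^{e'})*`. So
the theorem reduces to exponents: each of the five generators is the low-degree side of a binomial
of `I_S`, and an exponent vector dominating none of them is the strict degree maximum of its
fibre.
-/

section LowestForm

variable {R σ : Type*}

theorem support_lowestForm_subset [CommSemiring R] (f : MvPolynomial σ R) :
    (lowestForm f).support ⊆ f.support := by
  intro m hm
  rw [mem_support_iff, lowestForm, coeff_homogeneousComponent] at hm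
  exact mem_support_iff.2 (ite_ne_right_iff.1 hm).2

theorem degree_le_of_mem_support_lowestForm [CommSemiring R] {f : MvPolynomial σ R}
    {m k : σ →₀ ℕ} (hm : m ∈ (lowestForm f).support) (hk : k ∈ f.support) :
    m.degree ≤ k.degree := by
  rw [mem_support_iff, lowestForm, coeff_homogeneousComponent] at hm
  rw [(ite_ne_right_iff.1 hm).1]
  refine Nat.sInf_le fun h => mem_support_iff.1 hk ?_
  simpa only [coeff_homogeneousComponent, if_true, coeff_zero] using congrArg (coeff k) h

theorem lowestForm_add_eq_left [CommSemiring R] {g h : MvPolynomial σ R} {p : ℕ}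
    (hg : g.IsHomogeneous p) (hg₀ : g ≠ 0) (hh : ∀ i ≤ p, homogeneousComponent i h = 0) :
    lowestForm (g + h) = g := by
  have component_eq : ∀ i ≤ p, homogeneousComponent i (g + h) = if i = p then g else 0 := by
    intro i hi
    rw [map_add, homogeneousComponent_of_mem hg, hh i hi, add_zero]
  have component_p : homogeneousComponent p (g + h) = g := by
    rw [component_eq p le_rfl, if_pos rfl]
  have order_eq : sInf {i | homogeneousComponent i (g + h) ≠ 0} = p := by
    refine IsLeast.csInf_eq ⟨component_p.trans_ne hg₀, fun i hi => ?_⟩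
    by_contra! hip
    exact hi (by rw [component_eq i hip.le, if_neg hip.ne])
  rw [lowestForm, order_eq, component_p]

theorem mem_tangentConeIdeal_of_sub_mem [CommRing R] {I : Ideal (MvPolynomial σ R)}
    {g h : MvPolynomial σ R} {p q : ℕ} (hg : g.IsHomogeneous p) (hh : h.IsHomogeneous q)
    (hpq : p < q) (hI : g - h ∈ I) : g ∈ tangentConeIdeal I := by
  rcases eq_or_ne g 0 with rfl | hg₀
  · exact zero_mem _
  have lowestForm_eq : lowestForm (g - h) = g := by
    rw [sub_eq_add_neg]
    refine lowestForm_add_eq_left hg hg₀ fun i hi => ?_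
    rw [map_neg, homogeneousComponent_of_mem hh, if_neg (by omega), neg_zero]
  refine Ideal.subset_span ⟨g - h, hI, fun h_zero => hg₀ ?_, lowestForm_eq.symm⟩
  rw [← lowestForm_eq, h_zero, lowestForm, map_zero]

end LowestForm

section ToricIdeal

variable {R σ τ : Type*}

/-- The monomial map `x_i ↦ t^{a_i}` attached to a family of exponent vectors `a`; its kernel is the
toric ideal of the semigroup generated by `a`. -/
noncomputable def toricHom (R : Type*) [CommSemiring R] (a : σ → τ →₀ ℕ) :
    MvPolynomial σ R →ₐ[R] MvPolynomial τ R :=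
  aeval fun i => monomial (a i) 1

theorem toricHom_monomial [CommSemiring R] (a : σ → τ →₀ ℕ) (m : σ →₀ ℕ) (c : R) :
    toricHom R a (monomial m c) = monomial (Finsupp.weight a m) c := by
  simp only [toricHom, aeval_monomial, monomial_pow, one_pow, algebraMap_eq, Finsupp.weight_apply,
    monomial_finsupp_sum_index]

theorem coeff_toricHom [CommSemiring R] [DecidableEq τ] (a : σ → τ →₀ ℕ) (f : MvPolynomial σ R)
    (n : τ →₀ ℕ) :
    coeff n (toricHom R a f) = ∑ k ∈ f.support with Finsupp.weight a k = n, coeff k f := by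
  conv_lhs => rw [f.as_sum]
  simp only [map_sum, toricHom_monomial, coeff_sum, coeff_monomial, Finset.sum_filter]

theorem exists_ne_weight_eq_of_toricHom_eq_zero [CommSemiring R] {a : σ → τ →₀ ℕ}
    {f : MvPolynomial σ R} (hf : toricHom R a f = 0) {m : σ →₀ ℕ} (hm : m ∈ f.support) :
    ∃ k ∈ f.support, k ≠ m ∧ Finsupp.weight a k = Finsupp.weight a m := by
  classical
  by_contra! h_unique
  refine mem_support_iff.1 hm ?_
  calc coeff m f
      = ∑ k ∈ f.support with Finsupp.weight a k = Finsupp.weight a m, coeff k f := by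
        refine (Finset.sum_eq_single_of_mem m (by simp [hm]) fun k hk hkm => ?_).symm
        exact absurd (Finset.mem_filter.1 hk).2 (h_unique k (Finset.mem_filter.1 hk).1 hkm)
    _ = 0 := by rw [← coeff_toricHom, hf, coeff_zero]

theorem monomial_mem_tangentConeIdeal_ker_toricHom [CommRing R] {a : σ → τ →₀ ℕ}
    {e e' : σ →₀ ℕ} (h_weight : Finsupp.weight a e = Finsupp.weight a e')
    (h_degree : e.degree < e'.degree) (c : R) :
    monomial e c ∈ tangentConeIdeal (RingHom.ker (toricHom R a)) := by
  refine mem_tangentConeIdeal_of_sub_mem (isHomogeneous_monomial c rfl)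
    (isHomogeneous_monomial c rfl) h_degree ?_
  rw [RingHom.mem_ker, map_sub, toricHom_monomial, toricHom_monomial, h_weight, sub_self]

theorem tangentConeIdeal_ker_toricHom_le_span [CommSemiring R] {a : σ → τ →₀ ℕ}
    {E : Set (σ →₀ ℕ)}
    (h_dominates : ∀ m k, k ≠ m → Finsupp.weight a k = Finsupp.weight a m →
      m.degree ≤ k.degree → ∃ e ∈ E, e ≤ m) :
    tangentConeIdeal (RingHom.ker (toricHom R a)) ≤
      Ideal.span ((fun e => monomial e 1) '' E) := by
  refine Ideal.span_le.2 ?_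
  rintro _ ⟨f, hf, -, rfl⟩
  refine mem_ideal_span_monomial_image.2 fun m hm => ?_
  obtain ⟨k, hk, hkm, h_weight⟩ :=
    exists_ne_weight_eq_of_toricHom_eq_zero hf (support_lowestForm_subset f hm)
  exact h_dominates m k hkm h_weight (degree_le_of_mem_support_lowestForm hm hk)

theorem tangentConeIdeal_ker_toricHom_eq_span [CommRing R] {a : σ → τ →₀ ℕ} {E : Set (σ →₀ ℕ)}
    (h_binomial : ∀ e ∈ E, ∃ e', Finsupp.weight a e = Finsupp.weight a e' ∧ e.degree < e'.degree)
    (h_dominates : ∀ m k, k ≠ m → Finsupp.weight a k = Finsupp.weight a m →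
      m.degree ≤ k.degree → ∃ e ∈ E, e ≤ m) :
    tangentConeIdeal (RingHom.ker (toricHom R a)) =
      Ideal.span ((fun e => monomial e 1) '' E) := by
  refine (tangentConeIdeal_ker_toricHom_le_span h_dominates).antisymm (Ideal.span_le.2 ?_)
  rintro _ ⟨e, he, rfl⟩
  obtain ⟨e', h_weight, h_degree⟩ := h_binomial e he
  exact monomial_mem_tangentConeIdeal_ker_toricHom h_weight h_degree 1

end ToricIdeal

section Semigroup

open Finsupp

/-- The exponent vectors of `t_1^6, t_2^2, t_1^7, t_1^6t_2^4, t_1^{15}`, generating the semigroup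
`S`. -/
noncomputable def semigroupGenerators : Fin 5 → Fin 2 →₀ ℕ :=
  ![single 0 6, single 1 2, single 0 7, single 0 6 + single 1 4, single 0 15]

/-- The exponent vectors of `x_5^2, x_4, x_3^3x_5, x_3^6, x_1x_5`, generating the tangent cone
ideal of `S`; the variable `x_i` has index `i - 1`. -/
noncomputable def tangentConeExponents : Set (Fin 5 →₀ ℕ) :=
  {single 4 2, single 3 1, single 2 3 + single 4 1, single 2 6, single 0 1 + single 4 1}

theorem aeval_eq_toricHom_semigroupGenerators (R : Type*) [CommSemiring R] :
    aeval ![X 0 ^ 6, X 1 ^ 2, X 0 ^ 7, X 0 ^ 6 * X 1 ^ 4, X 0 ^ 15] =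
      toricHom R semigroupGenerators := by
  refine MvPolynomial.algHom_ext fun i => ?_
  fin_cases i <;> simp [toricHom, semigroupGenerators, X_pow_eq_monomial, monomial_mul]

theorem image_monomial_tangentConeExponents (R : Type*) [CommSemiring R] :
    (fun e => monomial e (1 : R)) '' tangentConeExponents =
      {X 4 ^ 2, X 3, X 2 ^ 3 * X 4, X 2 ^ 6, X 0 * X 4} := by
  simp [tangentConeExponents, Set.image_insert_eq, X, monomial_pow, monomial_mul]

theorem weight_semigroupGenerators_eq_iff (k m : Fin 5 →₀ ℕ) :
    weight semigroupGenerators k = weight semigroupGenerators m ↔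
      6 * k 0 + 7 * k 2 + 6 * k 3 + 15 * k 4 = 6 * m 0 + 7 * m 2 + 6 * m 3 + 15 * m 4 ∧
        2 * k 1 + 4 * k 3 = 2 * m 1 + 4 * m 3 := by
  simp [weight_eq_sum, Fin.sum_univ_five, semigroupGenerators, Finsupp.ext_iff, Fin.forall_fin_two,
    mul_comm]

theorem exists_weight_eq_degree_lt {e : Fin 5 →₀ ℕ} (he : e ∈ tangentConeExponents) :
    ∃ e', weight semigroupGenerators e = weight semigroupGenerators e' ∧
      e.degree < e'.degree := by
  simp only [weight_semigroupGenerators_eq_iff]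
  rcases he with rfl | rfl | rfl | rfl | rfl
  · exact ⟨single 0 5, by simp, by simp⟩
  · exact ⟨single 0 1 + single 1 2, by simp, by simp⟩
  · exact ⟨single 0 6, by simp, by simp⟩
  · exact ⟨single 0 7, by simp, by simp⟩
  · exact ⟨single 2 3, by simp, by simp⟩

theorem exists_mem_tangentConeExponents_le_iff (m : Fin 5 →₀ ℕ) :
    (∃ e ∈ tangentConeExponents, e ≤ m) ↔
      2 ≤ m 4 ∨ 1 ≤ m 3 ∨ (3 ≤ m 2 ∧ 1 ≤ m 4) ∨ 6 ≤ m 2 ∨ (1 ≤ m 0 ∧ 1 ≤ m 4) := by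
  simp [tangentConeExponents, Finsupp.le_def, Fin.forall_fin_succ]

theorem exists_mem_tangentConeExponents_le_of_weight_eq {m k : Fin 5 →₀ ℕ} (hkm : k ≠ m)
    (h_weight : weight semigroupGenerators k = weight semigroupGenerators m)
    (h_degree : m.degree ≤ k.degree) : ∃ e ∈ tangentConeExponents, e ≤ m := by
  rw [exists_mem_tangentConeExponents_le_iff]
  contrapose! hkm with h_standard
  obtain ⟨h_t₁, h_t₂⟩ := (weight_semigroupGenerators_eq_iff k m).1 h_weight
  simp only [degree_eq_sum, Fin.sum_univ_five] at h_degree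
  have hm₃ : m 3 = 0 := by omega
  -- The `t_1`-exponent is `6 (m 0 + m 2 + m 3 + m 4) + (m 2 + 9 * m 4)`.
  have h_excess : k 2 + 9 * k 4 + 12 * k 3 ≤ m 2 + 9 * m 4 := by omega
  have hk₄_le : k 4 ≤ m 4 := by linarith
  have hk₄ : k 4 = m 4 := by omega
  have hk₃ : k 3 = 0 := by omega
  have hk₂ : k 2 = m 2 := by omega
  have hk₀ : k 0 = m 0 := by omega
  have hk₁ : k 1 = m 1 := by omega
  ext i
  fin_cases i <;> simp [hk₀, hk₁, hk₂, hk₃, hk₄, hm₃]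

end Semigroup

theorem stmt_13_general (R : Type*) [CommRing R]
    (φ : MvPolynomial (Fin 5) R →ₐ[R] MvPolynomial (Fin 2) R)
    (hφ : φ = aeval ![X 0 ^ 6, X 1 ^ 2, X 0 ^ 7, X 0 ^ 6 * X 1 ^ 4, X 0 ^ 15]) :
    tangentConeIdeal (RingHom.ker φ) =
      Ideal.span {X 4 ^ 2, X 3, X 2 ^ 3 * X 4, X 2 ^ 6, X 0 * X 4} := by
  rw [hφ, aeval_eq_toricHom_semigroupGenerators, ← image_monomial_tangentConeExponents]
  exact tangentConeIdeal_ker_toricHom_eq_span (fun _ => exists_weight_eq_degree_lt)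
    fun _ _ => exists_mem_tangentConeExponents_le_of_weight_eq

/-- Let `I_S ⊂ K[x_1,…,x_5]` be the kernel of `φ` with
`φ(x_1)=t_1^6`, `φ(x_2)=t_2^2`, `φ(x_3)=t_1^7`, `φ(x_4)=t_1^6 t_2^4`,
`φ(x_5)=t_1^{15}`. Then the ideal of the tangent cone at the origin is
`I_S* = ⟨x_5^2, x_4, x_3^3x_5, x_3^6, x_1x_5⟩`. -/
theorem stmt_13 (K : Type*) [Field K]
    (φ : MvPolynomial (Fin 5) K →ₐ[K] MvPolynomial (Fin 2) K)
    (hφ : φ = aeval ![X 0 ^ 6, X 1 ^ 2, X 0 ^ 7, X 0 ^ 6 * X 1 ^ 4, X 0 ^ 15]) :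
    tangentConeIdeal (RingHom.ker φ) =
      Ideal.span {X 4 ^ 2, X 3, X 2 ^ 3 * X 4, X 2 ^ 6, X 0 * X 4} :=
  stmt_13_general K φ hφ
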